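/- Let F be a field and let a₀, a₁, a₂, f₀, f₁, f₂ be nonzero elements of F. Define S₀ : (a₀,a₁,a₂,f₀,f₁,f₂) ↦ (a₀^{-1}, a₀a₁, a₀a₂, f₀, f₁(a₀+f₀)/(1+a₀f₀), f₂(1+a₀f₀)/(a₀+f₀)) and S₁ : (a₀,a₁,a₂,f₀,f₁,f₂) ↦ (a₀a₁, a₁^{-1}, a₁a₂, f₀(1+a₁f₁)/(a₁+f₁), f₁, f₂(a₁+f₁)/(1+a₁f₁)). Then, whenever all intermediate denominators are nonzero, (S₀ ∘ S₁) ∘ (S₀ ∘ S₁) ∘ (S₀ ∘ S₁) is the identity map on such tuples. (This is the braid relation (s₀s₁)³ = 1 of the birational representation of W̃((A₂+A₁)^{(1)}) on the f-variables.) -/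

import Mathlib

/-- The birational action of the generator `s₀` of `W̃((A₂+A₁)⁽¹⁾)` on
`(a₀, a₁, a₂, f₀, f₁, f₂)`. -/
def weylS0 {F : Type*} [Field F] :
    F × F × F × F × F × F → F × F × F × F × F × F
  | (a0, a1, a2, f0, f1, f2) =>
    (a0⁻¹, a0 * a1, a0 * a2, f0,
      f1 * (a0 + f0) / (1 + a0 * f0),
      f2 * (1 + a0 * f0) / (a0 + f0))

/-- The birational action of the generator `s₁` of `W̃((A₂+A₁)⁽¹⁾)` on
`(a₀, a₁, a₂, f₀, f₁, f₂)`. -/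
def weylS1 {F : Type*} [Field F] :
    F × F × F × F × F × F → F × F × F × F × F × F
  | (a0, a1, a2, f0, f1, f2) =>
    (a0 * a1, a1⁻¹, a1 * a2,
      f0 * (1 + a1 * f1) / (a1 + f1), f1,
      f2 * (a1 + f1) / (1 + a1 * f1))

/-- Nonvanishing of the denominators appearing in `s₀`. -/
def denS0 {F : Type*} [Field F] (x : F × F × F × F × F × F) : Prop :=
  1 + x.1 * x.2.2.2.1 ≠ 0 ∧ x.1 + x.2.2.2.1 ≠ 0

/-- Nonvanishing of the denominators appearing in `s₁`. -/
def denS1 {F : Type*} [Field F] (x : F × F × F × F × F × F) : Prop :=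
  1 + x.2.1 * x.2.2.2.2.1 ≠ 0 ∧ x.2.1 + x.2.2.2.2.1 ≠ 0

/-!
Each generator multiplies or divides a neighbouring `f` by the same function
`ρ(a, f) = (a + f) / (1 + a f)`, and its denominators are nonzero exactly when `ρ(a, f) ≠ 0`.
Let `p`, `q`, `r` be the factors met along `s₁`, `s₀`, `s₁`. One rational identity expresses the
next factor through `q` and `ρ(a₀, f₀)`. Applied again after the first step, with the roles of
`0` and `1` exchanged through `ρ(a⁻¹, f) = ρ(a, f)⁻¹`, it gives the fifth factor, and the six
factors then cancel.
-/

section WeylFactor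

variable {F : Type*} [Field F]

/-- The factor by which a generator with parameter `a` and fixed variable `f` acts on the
neighbouring variables. With `x / 0 = 0`, it vanishes as soon as `a + f` or `1 + a * f` does. -/
def weylFactor (a f : F) : F := (a + f) / (1 + a * f)

theorem weylFactor_ne_zero_iff {a f : F} :
    weylFactor a f ≠ 0 ↔ 1 + a * f ≠ 0 ∧ a + f ≠ 0 := by
  rw [weylFactor, div_ne_zero_iff, and_comm]

theorem weylFactor_inv {a : F} (ha : a ≠ 0) (f : F) :
    weylFactor a⁻¹ f = (weylFactor a f)⁻¹ := by
  have hnum : a⁻¹ + f = (1 + a * f) / a := by field_simp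
  have hden : 1 + a⁻¹ * f = (a + f) / a := by field_simp
  rw [weylFactor, weylFactor, hnum, hden, div_div_div_cancel_right₀ ha, inv_div]

theorem weylFactor_div (a u : F) {v : F} (hv : v ≠ 0) :
    weylFactor a (u / v) = (a * v + u) / (v + a * u) := by
  have hnum : a + u / v = (a * v + u) / v := by field_simp
  have hden : 1 + a * (u / v) = (v + a * u) / v := by field_simp
  rw [weylFactor, hnum, hden, div_div_div_cancel_right₀ hv]

-- If `1 + a * x` or `a + x` vanishes, both sides are `0` because of `x / 0 = 0`; hence
-- `weylFactor a x ≠ 0` can be read off from the left-hand side.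
theorem weylFactor_div_mul {a b x y p q r : F}
    (hp : weylFactor b y = p) (hq : weylFactor (a * b) (x / p) = q)
    (hr : weylFactor a (y * q) = r) (hp0 : p ≠ 0) (hq0 : q ≠ 0) (hr0 : r ≠ 0) :
    weylFactor b (x / (p * r)) = q / weylFactor a x := by
  obtain ⟨hA, hB⟩ := weylFactor_ne_zero_iff.mp (hp ▸ hp0)
  set A := 1 + b * y with A_def
  set B := b + y with B_def
  set P := B + a * b * (x * A) with P_def
  set Q := a * b * B + x * A with Q_def
  set R := (1 + a * x) + a * b * (y * (a + x)) with R_def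
  set T := a * b * (1 + a * x) + y * (a + x) with T_def
  have p_eq : p = B / A := hp.symm
  have q_eq : q = Q / P := by
    rw [← hq, p_eq, div_div_eq_mul_div, weylFactor_div _ _ hB]
  have hP : P ≠ 0 := (div_ne_zero_iff.mp (q_eq ▸ hq0)).2
  have r_eq : r = A * T / (B * R) := by
    have r_num : a * P + y * Q = A * T := by simp only [P_def, Q_def, T_def, A_def, B_def]; ring
    have r_den : P + a * (y * Q) = B * R := by simp only [P_def, Q_def, R_def, A_def, B_def]; ring
    rw [← hr, q_eq, mul_div_assoc', weylFactor_div _ _ hP, r_num, r_den]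
  obtain ⟨hAT, hBR⟩ := div_ne_zero_iff.mp (r_eq ▸ hr0)
  have hR : R ≠ 0 := right_ne_zero_of_mul hBR
  have hT : T ≠ 0 := right_ne_zero_of_mul hAT
  have pr_eq : p * r = T / R := by rw [p_eq, r_eq]; field_simp
  have result_num : b * T + x * R = (1 + a * x) * Q := by
    simp only [Q_def, R_def, T_def, A_def, B_def]; ring
  have result_den : T + b * (x * R) = (a + x) * P := by
    simp only [P_def, R_def, T_def, A_def, B_def]; ring
  rw [pr_eq, div_div_eq_mul_div, weylFactor_div _ _ hT, result_num, result_den, q_eq, weylFactor,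
    div_div_div_eq, mul_comm Q, mul_comm P]

theorem weylFactor_mul_mul {a b x y p q r : F} (ha : a ≠ 0) (hb : b ≠ 0)
    (hp : weylFactor b y = p) (hq : weylFactor (a * b) (x / p) = q)
    (hr : weylFactor a (y * q) = r) (hp0 : p ≠ 0) (hq0 : q ≠ 0) (hr0 : r ≠ 0)
    (hx : weylFactor a x ≠ 0) :
    weylFactor (a * b) (y * weylFactor a x) = p * r := by
  have hab : a * b ≠ 0 := mul_ne_zero ha hb
  have hq_inv : weylFactor (a * b)⁻¹ (x / p) = q⁻¹ := by rw [weylFactor_inv hab, hq]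
  have hr_inv : weylFactor (b * (a * b)⁻¹) (y / q⁻¹) = r⁻¹ := by
    rw [mul_inv_rev, mul_inv_cancel_left₀ hb, div_inv_eq_mul, weylFactor_inv ha, hr]
  have ht : weylFactor b (x / p * r⁻¹) = q / weylFactor a x := by
    rw [← div_eq_mul_inv, div_div, weylFactor_div_mul hp hq hr hp0 hq0 hr0]
  have harg : y / (q⁻¹ * (q / weylFactor a x)) = y * weylFactor a x := by field_simp
  have hpr : weylFactor (a * b)⁻¹ (y * weylFactor a x) = r⁻¹ / p := by
    rw [← harg, weylFactor_div_mul hq_inv hr_inv ht (inv_ne_zero hq0) (inv_ne_zero hr0)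
      (div_ne_zero hq0 hx), hp]
  rw [← inv_inj, ← weylFactor_inv hab, hpr, mul_inv_rev, div_eq_mul_inv]

theorem denS0_iff {a0 a1 a2 f0 f1 f2 : F} :
    denS0 (a0, a1, a2, f0, f1, f2) ↔ weylFactor a0 f0 ≠ 0 :=
  weylFactor_ne_zero_iff.symm

theorem denS1_iff {a0 a1 a2 f0 f1 f2 : F} :
    denS1 (a0, a1, a2, f0, f1, f2) ↔ weylFactor a1 f1 ≠ 0 :=
  weylFactor_ne_zero_iff.symm

theorem weylS0_apply (a0 a1 a2 f0 f1 f2 : F) :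
    weylS0 (a0, a1, a2, f0, f1, f2) =
      (a0⁻¹, a0 * a1, a0 * a2, f0, f1 * weylFactor a0 f0, f2 / weylFactor a0 f0) := by
  simp only [weylS0, weylFactor, mul_div_assoc', div_div_eq_mul_div]

theorem weylS1_apply (a0 a1 a2 f0 f1 f2 : F) :
    weylS1 (a0, a1, a2, f0, f1, f2) =
      (a0 * a1, a1⁻¹, a1 * a2, f0 / weylFactor a1 f1, f1, f2 * weylFactor a1 f1) := by
  simp only [weylS1, weylFactor, mul_div_assoc', div_div_eq_mul_div]

theorem weylS0_weylS1_apply {a0 a1 a2 f0 f1 f2 p q : F} (ha1 : a1 ≠ 0)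
    (hp : weylFactor a1 f1 = p) (hq : weylFactor (a0 * a1) (f0 / p) = q) :
    weylS0 (weylS1 (a0, a1, a2, f0, f1, f2)) =
      ((a0 * a1)⁻¹, a0, a0 * a1 ^ 2 * a2, f0 / p, f1 * q, f2 * p / q) := by
  rw [weylS1_apply, hp, weylS0_apply, hq, mul_inv_cancel_right₀ ha1]
  ring_nf

theorem weylS1_weylS0_apply {a0 a1 a2 f0 f1 f2 p q : F} (ha0 : a0 ≠ 0)
    (hp : weylFactor a0 f0 = p) (hq : weylFactor (a0 * a1) (f1 * p) = q) :
    weylS1 (weylS0 (a0, a1, a2, f0, f1, f2)) =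
      (a1, (a0 * a1)⁻¹, a0 ^ 2 * a1 * a2, f0 / q, f1 * p, f2 / p * q) := by
  rw [weylS0_apply, hp, weylS1_apply, hq, inv_mul_cancel_left₀ ha0]
  ring_nf

theorem weylS1_weylS0_weylS1_apply {a0 a1 a2 f0 f1 f2 p q r : F} (ha0 : a0 ≠ 0) (ha1 : a1 ≠ 0)
    (hp : weylFactor a1 f1 = p) (hq : weylFactor (a0 * a1) (f0 / p) = q)
    (hr : weylFactor a0 (f1 * q) = r) :
    weylS1 (weylS0 (weylS1 (a0, a1, a2, f0, f1, f2))) =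
      (a1⁻¹, a0⁻¹, (a0 * a1) ^ 2 * a2, f0 / (p * r), f1 * q, f2 * (p * r) / q) := by
  rw [weylS0_weylS1_apply ha1 hp hq, weylS1_apply, hr, mul_inv_rev, inv_mul_cancel_right₀ ha0,
    div_div]
  ring_nf

theorem weylS0_weylS1_weylS0_apply {a0 a1 a2 f0 f1 f2 p q r : F} (ha0 : a0 ≠ 0) (ha1 : a1 ≠ 0)
    (hp : weylFactor a0 f0 = p) (hq : weylFactor (a0 * a1) (f1 * p) = q)
    (hr : weylFactor a1 (f0 / q) = r) :
    weylS0 (weylS1 (weylS0 (a0, a1, a2, f0, f1, f2))) =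
      (a1⁻¹, a0⁻¹, (a0 * a1) ^ 2 * a2, f0 / q, f1 * (p * r), f2 * q / (p * r)) := by
  rw [weylS1_weylS0_apply ha0 hp hq, weylS0_apply, hr, mul_inv_rev, mul_inv_cancel_left₀ ha1]
  ring_nf

end WeylFactor

/-- the braid relation `(s₀s₁)³ = 1` of the birational
representation of `W̃((A₂+A₁)⁽¹⁾)` on the `f`-variables. -/
theorem weylS0S1_braid
    (F : Type*) [Field F] (a0 a1 a2 f0 f1 f2 : F)
    (ha0 : a0 ≠ 0) (ha1 : a1 ≠ 0) (ha2 : a2 ≠ 0)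
    (hf0 : f0 ≠ 0) (hf1 : f1 ≠ 0) (hf2 : f2 ≠ 0)
    (h1 : denS1 (a0, a1, a2, f0, f1, f2))
    (h2 : denS0 (weylS1 (a0, a1, a2, f0, f1, f2)))
    (h3 : denS1 (weylS0 (weylS1 (a0, a1, a2, f0, f1, f2))))
    (h4 : denS0 (weylS1 (weylS0 (weylS1 (a0, a1, a2, f0, f1, f2)))))
    (h5 : denS1 (weylS0 (weylS1 (weylS0 (weylS1 (a0, a1, a2, f0, f1, f2))))))
    (h6 : denS0 (weylS1 (weylS0 (weylS1 (weylS0 (weylS1 (a0, a1, a2, f0, f1, f2))))))) :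
    weylS0 (weylS1 (weylS0 (weylS1 (weylS0 (weylS1 (a0, a1, a2, f0, f1, f2)))))) =
      (a0, a1, a2, f0, f1, f2) := by
  obtain ⟨p, hp⟩ : ∃ p, weylFactor a1 f1 = p := ⟨_, rfl⟩
  obtain ⟨q, hq⟩ : ∃ q, weylFactor (a0 * a1) (f0 / p) = q := ⟨_, rfl⟩
  obtain ⟨r, hr⟩ : ∃ r, weylFactor a0 (f1 * q) = r := ⟨_, rfl⟩
  obtain ⟨t, ht⟩ : ∃ t, weylFactor a0 f0 = t := ⟨_, rfl⟩
  rw [denS1_iff, hp] at h1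
  rw [weylS1_apply, denS0_iff, hp, hq] at h2
  rw [weylS0_weylS1_apply ha1 hp hq, denS1_iff, hr] at h3
  rw [weylS1_weylS0_weylS1_apply ha0 ha1 hp hq hr, denS0_iff] at h4
  have fourth_factor : weylFactor a1⁻¹ (f0 / (p * r)) = t / q := by
    rw [weylFactor_inv ha1, weylFactor_div_mul hp hq hr h1 h2 h3, ht, inv_div]
  have ht0 : t ≠ 0 := (div_ne_zero_iff.mp (fourth_factor ▸ h4)).1
  have fifth_factor : weylFactor (a1⁻¹ * a0⁻¹) (f1 * q * (t / q)) = (p * r)⁻¹ := by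
    rw [mul_assoc, mul_div_cancel₀ _ h2, ← mul_inv_rev, weylFactor_inv (mul_ne_zero ha0 ha1), ← ht,
      weylFactor_mul_mul ha0 ha1 hp hq hr h1 h2 h3 (ht ▸ ht0)]
  have sixth_factor : weylFactor a0⁻¹ (f0 / (p * r) / (p * r)⁻¹) = t⁻¹ := by
    rw [div_inv_eq_mul, div_mul_cancel₀ _ (mul_ne_zero h1 h3), weylFactor_inv ha0, ht]
  rw [weylS1_weylS0_weylS1_apply ha0 ha1 hp hq hr,
    weylS0_weylS1_weylS0_apply (inv_ne_zero ha1) (inv_ne_zero ha0)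
      fourth_factor fifth_factor sixth_factor]
  simp only [Prod.mk.injEq, inv_inv, true_and]
  refine ⟨?_, ?_, ?_, ?_⟩ <;> field_simp
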